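/- The itinerary of an irrational real number under f_Γ contains none of the two-letter blocks 00, 24, 42: for every irrational x and every n ∈ ℕ, it is not the case that I(x)(n) = 0 and I(x)(n+1) = 0; it is not the case that I(x)(n) = 2 and I(x)(n+1) = 4; and it is not the case that I(x)(n) = 4 and I(x)(n+1) = 2. -/

import Mathlib

/-!
Irrationality is preserved along the orbit, so it suffices to compare the symbols of an
irrational `y` and of `fGamma y`. If `-1 < y < 1` then `|-1 / y| > 1`, which excludes `00`
(`symb_fGamma_ne_zero`); a unit translation towards the origin from `y < -1` or `y > 1`
does not cross `0`, which excludes `24` and `42`.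
-/

noncomputable def fGamma (x : ℝ) : ℝ :=
  if x ≤ -1 then x + 1
  else if x < 1 then -1 / x
  else x - 1

noncomputable def symb (x : ℝ) : ℕ :=
  if x < -1 then 2 else if x < 1 then 0 else 4

noncomputable def itin (x : ℝ) : ℕ → ℕ :=
  fun n => symb (fGamma^[n] x)

/-- Irrational points stay irrational, so orbits avoid the breakpoints `0` and `±1`. -/
lemma irrational_fGamma {y : ℝ} (hy : Irrational y) : Irrational (fGamma y) := by
  unfold fGamma
  split_ifs
  · exact_mod_cast hy.add_natCast 1
  · have h : -1 / y = -y⁻¹ := by ring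
    rw [h]
    exact hy.inv.neg
  · exact_mod_cast hy.sub_natCast 1

lemma irrational_fGamma_iterate {x : ℝ} (hx : Irrational x) (n : ℕ) :
    Irrational (fGamma^[n] x) := by
  induction n with
  | zero => exact hx
  | succ k ih =>
    rw [Function.iterate_succ_apply']
    exact irrational_fGamma ih

lemma symb_eq_zero {y : ℝ} (h : symb y = 0) : -1 ≤ y ∧ y < 1 := by
  unfold symb at h
  split_ifs at h with h1 h2
  exact ⟨not_lt.mp h1, h2⟩

lemma symb_eq_two {y : ℝ} (h : symb y = 2) : y < -1 := by
  unfold symb at h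
  split_ifs at h <;> first | assumption | omega

lemma symb_eq_four {y : ℝ} (h : symb y = 4) : 1 ≤ y := by
  unfold symb at h
  split_ifs at h <;> first | omega | linarith

/-- The block `00` is excluded because `y ↦ -1 / y` sends `(-1, 1) \ {0}` outside `[-1, 1]`. -/
lemma symb_fGamma_ne_zero {y : ℝ} (hy : Irrational y) (h : symb y = 0) :
    symb (fGamma y) ≠ 0 := by
  intro h'
  obtain ⟨h1, h2⟩ := symb_eq_zero h
  obtain ⟨h3, h4⟩ := symb_eq_zero h'
  have hm : y ≠ -1 := by exact_mod_cast hy.ne_int (-1)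
  have h1' : -1 < y := lt_of_le_of_ne h1 hm.symm
  rw [fGamma, if_neg (not_le.mpr h1'), if_pos h2] at h3 h4
  rcases lt_or_gt_of_ne hy.ne_zero with h0 | h0
  · rw [div_lt_iff_of_neg h0] at h4
    linarith
  · rw [le_div_iff₀ h0] at h3
    linarith

theorem stmt_6 (x : ℝ) (hx : Irrational x) (n : ℕ) :
    ¬(itin x n = 0 ∧ itin x (n + 1) = 0) ∧
      ¬(itin x n = 2 ∧ itin x (n + 1) = 4) ∧
        ¬(itin x n = 4 ∧ itin x (n + 1) = 2) := by
  have hy := irrational_fGamma_iterate hx n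
  simp only [itin, Function.iterate_succ_apply']
  generalize fGamma^[n] x = y at hy ⊢
  refine ⟨fun ⟨h, h'⟩ => symb_fGamma_ne_zero hy h h', fun ⟨h, h'⟩ => ?_, fun ⟨h, h'⟩ => ?_⟩
  · -- a point left of `-1` moves right by one, to a negative point
    have h1 := symb_eq_two h
    have h2 := symb_eq_four h'
    rw [fGamma, if_pos h1.le] at h2
    linarith
  · -- a point right of `1` moves left by one, to a nonnegative point
    have h1 := symb_eq_four h
    have h2 := symb_eq_two h'
    rw [fGamma, if_neg (by linarith), if_neg (not_lt.mpr h1)] at h2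
    linarith
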